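/- Let G=(V,E) be a Bonnet-Myers sharp graph of diameter 2 and let x,y∈V with x∼y and d_x<d_y. Then there does not exist any z∈V∖{x,y} with x∼z and y≁z. -/

import Mathlib

open scoped Classical
open Finset

noncomputable section

/-- The degree of a vertex `x` in the graph `G`. -/
def deg {V : Type*} [Fintype V] (G : SimpleGraph V) (x : V) : ℕ :=
  (Finset.univ.filter (fun y => G.Adj x y)).card

/-- The diameter of `G`: the maximum of the combinatorial distance over all pairs of vertices. -/
def diam {V : Type*} [Fintype V] (G : SimpleGraph V) : ℕ :=
  Finset.univ.sup (fun xy : V × V => G.dist xy.1 xy.2)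

/-- The probability measure `μ_x^p` of the lazy simple random walk at `x` with idleness `p`. -/
def mu {V : Type*} [Fintype V] (G : SimpleGraph V) (p : ℝ) (x : V) : V → ℝ :=
  fun z => if z = x then p else if G.Adj x z then (1 - p) / (deg G x : ℝ) else 0

/-- The Wasserstein distance `W₁(μ₁, μ₂)` with respect to the combinatorial distance of `G`:
the infimum of the total transport cost over all transport plans from `μ₁` to `μ₂`. -/
def W1 {V : Type*} [Fintype V] (G : SimpleGraph V) (μ₁ μ₂ : V → ℝ) : ℝ :=
  sInf {c : ℝ | ∃ π : V → V → ℝ,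
    (∀ x y, 0 ≤ π x y ∧ π x y ≤ 1) ∧
    (∀ x, ∑ y, π x y = μ₁ x) ∧
    (∀ y, ∑ x, π x y = μ₂ y) ∧
    c = ∑ x, ∑ y, (G.dist x y : ℝ) * π x y}

/-- The `p`-Ollivier-Ricci curvature `κ_p(x,y) = 1 - W₁(μ_x^p, μ_y^p)`. -/
def kappa {V : Type*} [Fintype V] (G : SimpleGraph V) (p : ℝ) (x y : V) : ℝ :=
  1 - W1 G (mu G p x) (mu G p y)

/-- The Lin-Lu-Yau curvature `κ_LLY(x,y) = lim_{p→1} κ_p(x,y)/(1-p)`. -/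
def kappaLLY {V : Type*} [Fintype V] (G : SimpleGraph V) (x y : V) : ℝ :=
  Filter.limUnder (nhdsWithin 1 (Set.Iio 1)) (fun p => kappa G p x y / (1 - p))

/-- `G` is Bonnet-Myers sharp if the infimum of `κ_LLY` over the edges equals `2/diam(G)`. -/
def BMSharp {V : Type*} [Fintype V] (G : SimpleGraph V) : Prop :=
  sInf {r : ℝ | ∃ x y, G.Adj x y ∧ r = kappaLLY G x y} = 2 / (diam G : ℝ)

/-- `G` is obtained from the complete graph on its vertex set by deleting a matching
(a set of pairwise disjoint edges, encoded as a symmetric irreflexive relation in which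
every vertex has at most one partner). -/
def IsMatchingDeletionOfComplete {V : Type*} (G : SimpleGraph V) : Prop :=
  ∃ M : V → V → Prop, Symmetric M ∧ (∀ x, ¬ M x x) ∧
    (∀ x y z, M x y → M x z → y = z) ∧
    (∀ x y, G.Adj x y ↔ x ≠ y ∧ ¬ M x y)

/-- The graph `G(a,b)` on `2a+b` vertices `u_1, …, u_{2a}, v_1, …, v_b` (encoded as
`Fin (2a+b)`, with `u_i` the index `i-1` and `v_j` the index `2a+j-1`), in which two distinct
vertices are adjacent unless they form a pair `{u_{2i-1}, u_{2i}}`, i.e. `G(a,b)` is the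
complete graph `K_{2a+b}` with a matching of size `a` deleted. -/
def Gab (a b : ℕ) : SimpleGraph (Fin (2*a+b)) where
  Adj x y := x ≠ y ∧ ¬((x : ℕ) < 2*a ∧ (y : ℕ) < 2*a ∧ (x : ℕ)/2 = (y : ℕ)/2)
  symm := by
    refine ⟨?_⟩
    intro x y h
    exact ⟨h.1.symm, fun hc => h.2 ⟨hc.2.1, hc.1, hc.2.2.symm⟩⟩
  loopless := by refine ⟨?_⟩; intro x h; exact h.1 rfl

/-- The antitree `AT(a_1, …, a_N)` on the disjoint union of sets `V_1, …, V_N` with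
`|V_k| = a_k` (0-indexed here: `V_k` is `Fin (a k)` for `k : Fin N`): two distinct vertices
are adjacent iff they lie in the same set or in consecutive sets. -/
def antitree (N : ℕ) (a : Fin N → ℕ) : SimpleGraph (Σ k : Fin N, Fin (a k)) where
  Adj x y := x ≠ y ∧
    ((x.1 : ℕ) = (y.1 : ℕ) ∨ (x.1 : ℕ) + 1 = (y.1 : ℕ) ∨ (y.1 : ℕ) + 1 = (x.1 : ℕ))
  symm := by
    refine ⟨?_⟩
    intro x y h
    refine ⟨h.1.symm, ?_⟩
    rcases h.2 with h2 | h2 | h2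
    · exact Or.inl h2.symm
    · exact Or.inr (Or.inr h2)
    · exact Or.inr (Or.inl h2)
  loopless := by refine ⟨?_⟩; intro x h; exact h.1 rfl

theorem dist_ge_ind {V : Type*} (G : SimpleGraph V) (hconn : G.Connected) (S : Finset V) (v w : V) :
    (if w ∈ S then (1:ℝ) else 0) - (if v ∈ S then (1:ℝ) else 0) ≤ (G.dist v w : ℝ) := by
  by_cases h : v = w
  · subst h; simp
  · have h1 : (1:ℝ) ≤ (G.dist v w : ℝ) := by
      exact_mod_cast hconn.pos_dist_of_ne h
    split_ifs <;> linarith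

theorem mu_nonneg {V : Type*} [Fintype V] (G : SimpleGraph V) {p : ℝ} (h0 : 0 ≤ p) (h1 : p ≤ 1)
    (x z : V) : 0 ≤ mu G p x z := by
  unfold mu
  have : 0 ≤ 1 - p := by linarith
  split_ifs <;> positivity

theorem mu_sum_on {V : Type*} [Fintype V] (G : SimpleGraph V) (p : ℝ) (x : V) (S : Finset V) :
    ∑ z ∈ S, mu G p x z = (if x ∈ S then p else 0)
      + ((S.filter (fun z => G.Adj x z)).card : ℝ) * ((1 - p) / (deg G x : ℝ)) := by
  have : ∀ z, mu G p x z = (if z = x then p else 0) +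
      (if G.Adj x z then (1 - p) / (deg G x : ℝ) else 0) := by
    intro z
    unfold mu
    by_cases h : z = x
    · subst h; simp
    · simp [h]
  simp only [this, Finset.sum_add_distrib, Finset.sum_ite_eq']
  rw [← Finset.sum_filter, Finset.sum_const, nsmul_eq_mul]

theorem mu_sum {V : Type*} [Fintype V] (G : SimpleGraph V) (p : ℝ) (x : V) (hd : deg G x ≠ 0) :
    ∑ z, mu G p x z = 1 := by
  rw [mu_sum_on]
  have h : ((Finset.univ.filter (fun z => G.Adj x z)).card : ℝ) = (deg G x : ℝ) := rfl
  have h' : (deg G x : ℝ) ≠ 0 := by exact_mod_cast hd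
  rw [h]; simp; field_simp; ring

theorem W1_nonempty {V : Type*} [Fintype V] (G : SimpleGraph V) (p : ℝ) (h0 : 0 ≤ p) (h1 : p ≤ 1)
    (x y : V) (hx : deg G x ≠ 0) (hy : deg G y ≠ 0) :
    {c : ℝ | ∃ π : V → V → ℝ,
    (∀ x y, 0 ≤ π x y ∧ π x y ≤ 1) ∧
    (∀ v, ∑ w, π v w = mu G p x v) ∧
    (∀ w, ∑ v, π v w = mu G p y w) ∧
    c = ∑ x, ∑ y, (G.dist x y : ℝ) * π x y}.Nonempty := by
  refine ⟨_, fun v w => mu G p x v * mu G p y w, ?_, ?_, ?_, rfl⟩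
  · intro v w
    have a := mu_nonneg G h0 h1 x v
    have b := mu_nonneg G h0 h1 y w
    have a' : mu G p x v ≤ 1 := by
      rw [← mu_sum G p x hx]
      exact Finset.single_le_sum (fun i _ => mu_nonneg G h0 h1 x i) (Finset.mem_univ v)
    have b' : mu G p y w ≤ 1 := by
      rw [← mu_sum G p y hy]
      exact Finset.single_le_sum (fun i _ => mu_nonneg G h0 h1 y i) (Finset.mem_univ w)
    exact ⟨mul_nonneg a b, mul_le_one₀ a' b b'⟩
  · intro v; rw [← Finset.mul_sum, mu_sum G p y hy, mul_one]
  · intro w; rw [← Finset.sum_mul, mu_sum G p x hx, one_mul]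

theorem cost_ge {V : Type*} [Fintype V] (G : SimpleGraph V) (hconn : G.Connected)
    (S : Finset V) (μ ν : V → ℝ) (π : V → V → ℝ) (h : ∀ v w, 0 ≤ π v w)
    (h1 : ∀ v, ∑ w, π v w = μ v) (h2 : ∀ w, ∑ v, π v w = ν w) :
    ∑ w ∈ S, ν w - ∑ v ∈ S, μ v ≤ ∑ v, ∑ w, (G.dist v w : ℝ) * π v w := by
  have e1 : ∑ w ∈ S, ν w = ∑ v, ∑ w, (if w ∈ S then (1:ℝ) else 0) * π v w := by
    rw [Finset.sum_comm]
    simp only [← Finset.mul_sum, h2]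
    simp
  have e2 : ∑ v ∈ S, μ v = ∑ v, ∑ w, (if v ∈ S then (1:ℝ) else 0) * π v w := by
    simp only [← Finset.mul_sum, h1]
    simp
  rw [e1, e2, ← Finset.sum_sub_distrib]
  refine Finset.sum_le_sum fun v _ => ?_
  rw [← Finset.sum_sub_distrib]
  refine Finset.sum_le_sum fun w _ => ?_
  rw [← sub_mul]
  exact mul_le_mul_of_nonneg_right (dist_ge_ind G hconn S v w) (h v w)

theorem W1_ge {V : Type*} [Fintype V] (G : SimpleGraph V) (hconn : G.Connected)
    (S : Finset V) (p : ℝ) (h0 : 0 ≤ p) (h1 : p ≤ 1)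
    (x y : V) (hx : deg G x ≠ 0) (hy : deg G y ≠ 0) :
    ∑ w ∈ S, mu G p y w - ∑ v ∈ S, mu G p x v ≤ W1 G (mu G p x) (mu G p y) := by
  refine le_csInf (W1_nonempty G p h0 h1 x y hx hy) ?_
  rintro c ⟨π, a, b, d, rfl⟩
  exact cost_ge G hconn S _ _ π (fun v w => (a v w).1) b d

theorem mu_interp {V : Type*} [Fintype V] (G : SimpleGraph V) (p q t : ℝ)
    (ht : t * (1 - p) = 1 - q) (x z : V) :
    mu G q x z = t * mu G p x z + (1 - t) * (if z = x then 1 else 0) := by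
  unfold mu
  split_ifs
  · linarith
  · rw [← ht]; ring
  · ring

theorem W1_interp {V : Type*} [Fintype V] (G : SimpleGraph V) (p q t : ℝ) (h0 : 0 ≤ p) (h1 : p ≤ 1)
    (t0 : 0 < t) (t1 : t ≤ 1) (ht : t * (1 - p) = 1 - q)
    (x y : V) (hxy : G.Adj x y) (hx : deg G x ≠ 0) (hy : deg G y ≠ 0) :
    W1 G (mu G q x) (mu G q y) ≤ t * W1 G (mu G p x) (mu G p y) + (1 - t) := by
  have key : (W1 G (mu G q x) (mu G q y) - (1 - t)) / t ≤ W1 G (mu G p x) (mu G p y) := by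
    refine le_csInf (W1_nonempty G p h0 h1 x y hx hy) ?_
    rintro c ⟨π, a, b, d, rfl⟩
    rw [div_le_iff₀ t0, sub_le_iff_le_add]
    refine csInf_le ?_ ?_
    · refine ⟨0, ?_⟩
      rintro c ⟨π, a, b, d, rfl⟩
      exact Finset.sum_nonneg fun v _ => Finset.sum_nonneg fun w _ =>
        mul_nonneg (Nat.cast_nonneg _) (a v w).1
    · refine ⟨fun v w => t * π v w + (1 - t) * ((if v = x then 1 else 0) * (if w = y then 1 else 0)),
        ?_, ?_, ?_, ?_⟩
      · intro v w
        obtain ⟨a1, a2⟩ := a v w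
        have m1 : 0 ≤ t * π v w := by positivity
        have m2 : t * π v w ≤ t := by nlinarith
        constructor
        · beta_reduce; split_ifs <;> linarith
        · beta_reduce; split_ifs <;> linarith
      · intro v
        rw [Finset.sum_add_distrib, ← Finset.mul_sum, b, ← Finset.mul_sum, ← Finset.mul_sum,
          mu_interp G p q t ht]
        simp
      · intro w
        rw [Finset.sum_add_distrib, ← Finset.mul_sum, d, ← Finset.mul_sum, ← Finset.sum_mul,
          mu_interp G p q t ht]
        simp
      · have hd : G.dist x y = 1 := SimpleGraph.dist_eq_one_iff_adj.mpr hxy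
        have e : ∑ v, ∑ w, (G.dist v w : ℝ) * ((if v = x then 1 else 0) * (if w = y then 1 else 0))
            = 1 := by
          rw [Finset.sum_eq_single x]
          · rw [Finset.sum_eq_single y] <;> simp +contextual [hd]
          · intro v _ hv; simp [hv]
          · simp
        calc _ = t * (∑ v, ∑ w, (G.dist v w : ℝ) * π v w) + (1 - t) *
              ∑ v, ∑ w, (G.dist v w : ℝ) * ((if v = x then 1 else 0) * (if w = y then 1 else 0)) := by
                rw [e]; ring
          _ = _ := by
            simp only [Finset.mul_sum, ← Finset.sum_add_distrib]
            refine Finset.sum_congr rfl fun v _ => Finset.sum_congr rfl fun w _ => ?_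
            ring
  rw [div_le_iff₀ t0] at key
  linarith

/-- Upper bound for the curvature of an edge. -/
theorem kappaLLY_le {V : Type*} [Fintype V] (G : SimpleGraph V) 
    (x y : V) (hxy : G.Adj x y) (hx : deg G x ≠ 0) (hy : deg G y ≠ 0) (K : ℝ)
    (hK : ∀ p ∈ Set.Ioo (0:ℝ) 1, kappa G p x y / (1 - p) ≤ K) : kappaLLY G x y ≤ K := by
  have mono : MonotoneOn (fun p => kappa G p x y / (1 - p)) (Set.Ioo (0:ℝ) 1) := by
    intro p hp q hq hpq
    have p1 : 0 < 1 - p := by linarith [hp.2]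
    have q1 : 0 < 1 - q := by linarith [hq.2]
    have h := W1_interp G p q ((1 - q) / (1 - p)) hp.1.le hp.2.le (by positivity)
      (by rw [div_le_one p1]; linarith) (by field_simp) x y hxy hx hy
    show kappa G p x y / (1 - p) ≤ kappa G q x y / (1 - q)
    rw [le_div_iff₀ q1]
    have : kappa G p x y / (1 - p) * (1 - q) = (1 - q) / (1 - p) * kappa G p x y := by ring
    rw [this]
    unfold kappa
    linarith
  have bdd : BddAbove ((fun p => kappa G p x y / (1 - p)) '' (Set.Ioo (0:ℝ) 1)) := by
    refine ⟨K, ?_⟩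
    rintro _ ⟨p, hp, rfl⟩
    exact hK p hp
  have T := mono.tendsto_nhdsWithin_Ioo_left (Set.nonempty_Ioo.mpr one_pos) bdd
  have hlim : kappaLLY G x y = _ := T.limUnder_eq
  rw [hlim]
  refine csSup_le ((Set.nonempty_Ioo.mpr one_pos).image _) ?_
  rintro _ ⟨p, hp, rfl⟩
  exact hK p hp

theorem stmt7 {V : Type*} [Fintype V] (G : SimpleGraph V) (hconn : G.Connected)
    (hdiam : diam G = 2) (hBM : BMSharp G) (x y : V) (hxy : G.Adj x y)
    (hdeg : deg G x < deg G y) :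
    ¬ ∃ z : V, z ≠ x ∧ z ≠ y ∧ G.Adj x z ∧ ¬ G.Adj y z := by
  rintro ⟨z, hzx, hzy, hxz, hyz⟩
  have hx : deg G x ≠ 0 := by
    refine (Finset.card_pos.mpr ⟨y, ?_⟩).ne'
    simpa using hxy
  have hy : deg G y ≠ 0 := by omega
  have hge : 1 ≤ kappaLLY G x y := by
    have h : sInf {r : ℝ | ∃ x y, G.Adj x y ∧ r = kappaLLY G x y} = 1 := by
      rw [hBM, hdiam]; norm_num
    rw [← h]
    refine csInf_le ?_ ⟨x, y, hxy, rfl⟩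
    refine (Set.Finite.subset (Set.finite_range (fun u : V × V => kappaLLY G u.1 u.2)) ?_).bddBelow
    rintro r ⟨u, v, -, rfl⟩
    exact ⟨(u, v), rfl⟩
  set N := Finset.univ.filter (fun w => G.Adj x w) with hN
  set M := Finset.univ.filter (fun w => G.Adj y w) with hM
  have dN : deg G x = N.card := rfl
  have dM : deg G y = M.card := rfl
  set C := M \ insert x N with hC
  have hc1 : M.card = 1 + (M ∩ N).card + C.card := by
    have h1 := Finset.card_sdiff_add_card_inter M (insert x N)
    have h2 : M ∩ insert x N = insert x (M ∩ N) := by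
      rw [Finset.inter_insert_of_mem]
      simp [hM, hxy.symm]
    rw [h2, Finset.card_insert_of_notMem (by simp [hN])] at h1
    rw [← hC] at h1
    omega
  have hc2 : (M ∩ N).card + 2 ≤ N.card := by
    have hyM : y ∉ insert z (M ∩ N) := by simp [hM, hzy.symm]
    have hzM : z ∉ M ∩ N := by simp [hM, hyz]
    have : (insert y (insert z (M ∩ N))).card ≤ N.card := by
      refine Finset.card_le_card ?_
      intro w hw
      simp only [Finset.mem_insert, Finset.mem_inter] at hw
      rcases hw with rfl | rfl | hw
      · simpa [hN] using hxy
      · simpa [hN] using hxz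
      · exact hw.2
    rw [Finset.card_insert_of_notMem hyM, Finset.card_insert_of_notMem hzM] at this
    omega
  have hfin : M.card < C.card * N.card := by
    have a1 : 2 ≤ C.card := by omega
    have a2 : 2 ≤ N.card := by omega
    nlinarith
  have hyC : y ∉ C := by simp [hC, hM]
  have f1 : (insert y C).filter (fun w => G.Adj y w) = C := by
    ext w
    simp only [hC, hM, hN, Finset.mem_filter, Finset.mem_insert, Finset.mem_sdiff,
      Finset.mem_univ, true_and]
    constructor
    · rintro ⟨rfl | h, h'⟩
      · exact absurd h' (G.irrefl)
      · exact h
    · intro h; exact ⟨Or.inr h, h.1⟩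
  have f2 : (insert y C).filter (fun w => G.Adj x w) = {y} := by
    ext w
    simp only [hC, hM, hN, Finset.mem_filter, Finset.mem_insert, Finset.mem_sdiff,
      Finset.mem_univ, true_and, Finset.mem_singleton]
    constructor
    · rintro ⟨h | h, h'⟩
      · exact h
      · exact absurd (Or.inr h') h.2
    · rintro rfl; exact ⟨Or.inl rfl, hxy⟩
  have hxS : x ∉ insert y C := by simp [hC, hxy.ne]
  have hK : kappaLLY G x y ≤ 1 - (C.card : ℝ) / M.card + 1 / N.card := by
    refine kappaLLY_le G x y hxy hx hy _ ?_
    intro p hp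
    have p1 : 0 < 1 - p := by linarith [hp.2]
    have h := W1_ge G hconn (insert y C) p hp.1.le hp.2.le x y hx hy
    rw [mu_sum_on, mu_sum_on, f1, f2, if_neg hxS, if_pos (Finset.mem_insert_self _ _),
      Finset.card_singleton, dN, dM] at h
    rw [div_le_iff₀ p1]
    unfold kappa
    have e : (1 - (C.card : ℝ) / M.card + 1 / N.card) * (1 - p)
      = 1 - (p + C.card * ((1 - p) / M.card) - (0 + (1:ℕ) * ((1 - p) / N.card))) := by
      push_cast; ring
    rw [e]
    linarith
  have hN0 : (0:ℝ) < N.card := by exact_mod_cast (by omega : 0 < N.card)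
  have hM0 : (0:ℝ) < M.card := by exact_mod_cast (by omega : 0 < M.card)
  have : (1:ℝ) / N.card < (C.card : ℝ) / M.card := by
    rw [div_lt_div_iff₀ hN0 hM0, one_mul]
    exact_mod_cast hfin
  linarith
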